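/- Let E_σ(x,y) = exp(−‖x−y‖₁/σ) be the ℓ¹-norm exponential kernel on ℝ^d with parameter σ > 0, where ‖z‖₁ = ∑_{j=1}^d |z_j|. For 0 < σ₁ < σ₂: (a) (σ₂/σ₁)^d E_{σ₂} − E_{σ₁} is a positive semidefinite kernel on ℝ^d, and (σ₂/σ₁)^d is the least constant λ ≥ 0 for which λE_{σ₂} − E_{σ₁} is a positive semidefinite kernel; (b) (σ₂/σ₁)^d E_{σ₁} − E_{σ₂} is a positive semidefinite kernel on ℝ^d, and (σ₂/σ₁)^d is the least constant λ ≥ 0 for which λE_{σ₁} − E_{σ₂} is a positive semidefinite kernel. -/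

import Mathlib

open scoped ComplexOrder

/-- A function `K : X × X → ℂ` is a positive semidefinite kernel if every finite
quadratic form `∑ j, ∑ k, c j * conj (c k) * K (x j) (x k)` is a nonnegative real number. -/
def IsPSDKernel {X : Type*} (K : X → X → ℂ) : Prop :=
  ∀ (n : ℕ) (x : Fin n → X) (c : Fin n → ℂ),
    0 ≤ ∑ j, ∑ k, c j * (starRingEnd ℂ) (c k) * K (x j) (x k)

/-- The `ℓ¹`-norm exponential kernel `E_σ(x,y) = exp(−‖x−y‖₁/σ)` on `ℝ^d`. -/
noncomputable def l1expK (d : ℕ) (σ : ℝ) (x y : EuclideanSpace ℝ (Fin d)) : ℂ :=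
  ((Real.exp (-(∑ j, |x j - y j|) / σ) : ℝ) : ℂ)

/-!
The ratio of the Fourier transforms of `exp (-|x| / τ)` and `exp (-|x| / σ)` is monotone in the
absolute value of the frequency, from `τ / σ` at `0` to `σ / τ` at `∞`. Hence, with
`r = max (σ / τ) (τ / σ)`, the easy half of Bochner's theorem makes `r E_σ - E_τ` positive
semidefinite on `ℝ`, and Schur's product theorem makes `r ^ d E_σ - E_τ` positive semidefinite on
`ℝ ^ d`.

For sharpness, take `N ^ d` grid points of spacing `t` with product coefficients `∏ i, ε ^ (u i)`,
`ε = ±1`. The quadratic form is then a `d`-th power, and after division by `N ^ d` it tends to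
`((1 + z) / (1 - z)) ^ d` with `z = ε exp (-t / σ)`. As `t → 0`, alternating coefficients, which
test the highest frequency of the grid, yield the bound `(σ / τ) ^ d`, and constant coefficients,
which test the frequency `0`, yield `(τ / σ) ^ d`.
-/

open MeasureTheory Filter
open scoped Topology Real FourierTransform RealInnerProductSpace ComplexConjugate

section KernelForm

variable {X ι : Type*} [Fintype ι] {K : X → X → ℂ}

/-- The quadratic form of the kernel `K` at the points `x` with coefficients `c`, over an arbitrary
finite index type so that product grids can serve as test points. -/
noncomputable def kernelForm (K : X → X → ℂ) (x : ι → X) (c : ι → ℂ) : ℂ :=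
  ∑ j, ∑ k, c j * conj (c k) * K (x j) (x k)

lemma IsPSDKernel.kernelForm_nonneg (hK : IsPSDKernel K) (x : ι → X) (c : ι → ℂ) :
    0 ≤ kernelForm K x c := by
  let e := (Fintype.equivFin ι).symm
  have h : kernelForm K x c = kernelForm K (x ∘ e) (c ∘ e) := by
    simp only [kernelForm, Function.comp_apply, ← e.sum_comp]
  exact h ▸ hK _ _ _

lemma kernelForm_const_mul_sub (a : ℂ) (G K : X → X → ℂ) (x : ι → X) (c : ι → ℂ) :
    kernelForm (fun u v => a * G u v - K u v) x c = a * kernelForm G x c - kernelForm K x c := by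
  simp only [kernelForm, mul_sub, Finset.sum_sub_distrib, Finset.mul_sum, mul_left_comm]

lemma kernelForm_prod {κ : Type*} [Fintype κ] [DecidableEq κ] {X ι : κ → Type*}
    [∀ i, Fintype (ι i)] (K : ∀ i, X i → X i → ℂ) (x : ∀ i, ι i → X i) (c : ∀ i, ι i → ℂ) :
    kernelForm (fun u v => ∏ i, K i (u i) (v i)) (fun (f : ∀ i, ι i) i => x i (f i))
      (fun f => ∏ i, c i (f i)) = ∏ i, kernelForm (K i) (x i) (c i) := by
  simp only [kernelForm, Fintype.prod_sum, map_prod, ← Finset.prod_mul_distrib]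

lemma IsPSDKernel.prod_kernelForm_le {κ : Type*} [Fintype κ] {X ι : κ → Type*}
    [∀ i, Fintype (ι i)] {K G : ∀ i, X i → X i → ℂ} {a : ℂ}
    (h : IsPSDKernel fun u v : ∀ i, X i => a * ∏ i, G i (u i) (v i) - ∏ i, K i (u i) (v i))
    (x : ∀ i, ι i → X i) (c : ∀ i, ι i → ℂ) :
    ∏ i, kernelForm (K i) (x i) (c i) ≤ a * ∏ i, kernelForm (G i) (x i) (c i) := by
  classical
  have hnonneg := h.kernelForm_nonneg (fun f : ∀ i, ι i => fun i => x i (f i))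
    fun f => ∏ i, c i (f i)
  rwa [kernelForm_const_mul_sub, kernelForm_prod, kernelForm_prod, sub_nonneg] at hnonneg

end KernelForm

section PSDKernel

variable {X : Type*} {K G : X → X → ℂ}

lemma IsPSDKernel.conj_symm (hK : IsPSDKernel K) (x y : X) : conj (K y x) = K x y := by
  have him (a b : ℂ) : (kernelForm K ![x, y] ![a, b]).im = 0 :=
    (Complex.nonneg_iff.1 (hK.kernelForm_nonneg _ _)).2.symm
  have hx := him 1 0
  have hy := him 0 1
  have h1 := him 1 1
  have hI := him 1 Complex.I
  simp only [kernelForm, Fin.sum_univ_two, Matrix.cons_val_zero, Matrix.cons_val_one,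
    Matrix.cons_val_fin_one, map_one, map_zero, mul_one, one_mul, mul_zero, zero_mul, add_zero,
    zero_add, Complex.conj_I, mul_neg, neg_mul, Complex.I_mul_I, neg_neg, Complex.add_im,
    Complex.neg_im, Complex.I_mul_im] at hx hy h1 hI
  exact Complex.ext (by rw [Complex.conj_re]; linarith) (by rw [Complex.conj_im]; linarith)

lemma isPSDKernel_iff_posSemidef : IsPSDKernel K ↔ (Matrix.of K).PosSemidef := by
  refine ⟨fun hK => ⟨Matrix.IsHermitian.ext hK.conj_symm, fun c => ?_⟩, fun hK n x c => ?_⟩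
  · have := hK.kernelForm_nonneg (fun j : c.support => (j : X)) (fun j => conj (c j))
    convert this using 1
    simp only [kernelForm, Finsupp.sum, ← Finset.sum_coe_sort c.support]
    simp [mul_right_comm]
  · have := (hK.submatrix x).dotProduct_mulVec_nonneg (star c)
    simpa [dotProduct, Matrix.mulVec, Finset.mul_sum, mul_comm, mul_left_comm] using this

namespace IsPSDKernel

lemma comp (hK : IsPSDKernel K) {Y : Type*} (f : Y → X) :
    IsPSDKernel fun x y => K (f x) (f y) :=
  fun n x c => hK n (f ∘ x) c

lemma add (hK : IsPSDKernel K) (hG : IsPSDKernel G) : IsPSDKernel fun x y => K x y + G x y :=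
  isPSDKernel_iff_posSemidef.2 <|
    (isPSDKernel_iff_posSemidef.1 hK).add (isPSDKernel_iff_posSemidef.1 hG)

lemma mul (hK : IsPSDKernel K) (hG : IsPSDKernel G) : IsPSDKernel fun x y => K x y * G x y :=
  isPSDKernel_iff_posSemidef.2 <|
    (isPSDKernel_iff_posSemidef.1 hK).hadamard (isPSDKernel_iff_posSemidef.1 hG)

lemma const_mul (hK : IsPSDKernel K) {a : ℂ} (ha : 0 ≤ a) : IsPSDKernel fun x y => a * K x y := by
  intro n x c
  simpa only [Finset.mul_sum, mul_left_comm] using mul_nonneg ha (hK n x c)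

lemma integral {Ω : Type*} [MeasurableSpace Ω] {μ : Measure Ω} {K : Ω → X → X → ℂ}
    (hK : ∀ ω, IsPSDKernel (K ω)) (hint : ∀ x y, Integrable (fun ω => K ω x y) μ) :
    IsPSDKernel fun x y => ∫ ω, K ω x y ∂μ := by
  intro n x c
  have h : ∑ j, ∑ k, c j * conj (c k) * ∫ ω, K ω (x j) (x k) ∂μ =
      ∫ ω, ∑ j, ∑ k, c j * conj (c k) * K ω (x j) (x k) ∂μ := by
    rw [integral_finsetSum _ fun j _ => integrable_finsetSum _ fun k _ => (hint _ _).const_mul _]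
    refine Finset.sum_congr rfl fun j _ => ?_
    rw [integral_finsetSum _ fun k _ => (hint _ _).const_mul _]
    simp only [integral_const_mul]
  exact h ▸ integral_nonneg fun ω => hK ω n x c

end IsPSDKernel

lemma isPSDKernel_mul_conj (f : X → ℂ) : IsPSDKernel fun x y => f x * conj (f y) := by
  intro n x c
  have h : ∑ j, ∑ k, c j * conj (c k) * (f (x j) * conj (f (x k))) =
      (∑ j, c j * f (x j)) * conj (∑ j, c j * f (x j)) := by
    simp only [map_sum, map_mul, Finset.sum_mul_sum, mul_mul_mul_comm]
  exact h ▸ mul_star_self_nonneg _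

lemma isPSDKernel_one : IsPSDKernel fun _ _ : X => 1 := by
  simpa using isPSDKernel_mul_conj fun _ : X => 1

lemma IsPSDKernel.finsetProd {ι : Type*} (s : Finset ι) {K : ι → X → X → ℂ}
    (hK : ∀ i ∈ s, IsPSDKernel (K i)) : IsPSDKernel fun x y => ∏ i ∈ s, K i x y := by
  induction s using Finset.cons_induction with
  | empty => simpa only [Finset.prod_empty] using isPSDKernel_one
  | cons a s ha ih =>
    simp only [Finset.prod_cons]
    rw [Finset.forall_mem_cons] at hK
    exact hK.1.mul (ih hK.2)

lemma IsPSDKernel.finsetProd_sub {ι : Type*} (s : Finset ι) {K G : ι → X → X → ℂ}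
    (hK : ∀ i ∈ s, IsPSDKernel (K i)) (hKG : ∀ i ∈ s, IsPSDKernel fun x y => G i x y - K i x y) :
    IsPSDKernel fun x y => ∏ i ∈ s, G i x y - ∏ i ∈ s, K i x y := by
  induction s using Finset.cons_induction with
  | empty => simpa using isPSDKernel_mul_conj fun _ : X => 0
  | cons a s ha ih =>
    rw [Finset.forall_mem_cons] at hK hKG
    have hG : ∀ i ∈ s, IsPSDKernel (G i) := fun i hi => by
      simpa using (hKG.2 i hi).add (hK.2 i hi)
    -- `G a * ∏ G - K a * ∏ K = (G a - K a) * ∏ G + K a * (∏ G - ∏ K)`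
    convert (hKG.1.mul (.finsetProd s hG)).add (hK.1.mul (ih hK.2 hKG.2)) using 3
    simp only [Finset.prod_cons]
    ring

lemma isPSDKernel_sub_of_fourier_nonneg {V : Type*} [NormedAddCommGroup V] [InnerProductSpace ℝ V]
    [MeasurableSpace V] [BorelSpace V] [FiniteDimensional ℝ V] {f : V → ℂ} (hf : Continuous f)
    (hfi : Integrable f) (hFi : Integrable (𝓕 f)) (hF : ∀ w, 0 ≤ 𝓕 f w) :
    IsPSDKernel fun x y => f (x - y) := by
  have hinv (x : V) : f x = ∫ w, 𝐞 ⟪w, x⟫ • 𝓕 f w := by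
    rw [← Real.fourierInv_eq, hf.fourierInv_fourier_eq hfi hFi]
  have hchar (w x y : V) :
      𝐞 ⟪w, x - y⟫ • 𝓕 f w = 𝓕 f w * ((𝐞 ⟪w, x⟫ : ℂ) * conj (𝐞 ⟪w, y⟫ : ℂ)) := by
    rw [inner_sub_right, AddChar.map_sub_eq_div, Circle.smul_def, Circle.coe_div,
      ← Circle.coe_inv_eq_conj, Circle.coe_inv, smul_eq_mul, mul_comm, div_eq_mul_inv]
  simp only [hinv]
  refine .integral (fun w => ?_) fun x y => ?_
  · simpa only [hchar] using (isPSDKernel_mul_conj fun x => (𝐞 ⟪w, x⟫ : ℂ)).const_mul (hF w)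
  · simpa only [← inner_neg_right, neg_sub] using
      (Real.fourierIntegral_convergent_iff (y - x)).2 hFi

end PSDKernel

lemma fourier_const_mul_sub {V : Type*} [NormedAddCommGroup V] [InnerProductSpace ℝ V]
    [MeasurableSpace V] [BorelSpace V] [FiniteDimensional ℝ V] {f g : V → ℂ} (hf : Integrable f)
    (hg : Integrable g) (a : ℂ) (w : V) :
    𝓕 (fun x => a * f x - g x) w = a * 𝓕 f w - 𝓕 g w := by
  have hf' := ((Real.fourierIntegral_convergent_iff w).2 hf).const_mul a
  have hg' := (Real.fourierIntegral_convergent_iff w).2 hg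
  simp only [Real.fourier_eq, smul_sub, mul_smul_comm, ← integral_const_mul]
  exact integral_sub (by simpa only [mul_smul_comm] using hf') hg'

section LaplaceTransform

lemma eqOn_cexp_mul_sub_mul_abs_Iic (a : ℝ) (s : ℂ) :
    Set.EqOn (fun x : ℝ => Complex.exp (s * x - a * |x|))
      (fun x : ℝ => Complex.exp ((s + a) * x)) (Set.Iic 0) := by
  intro x hx
  simp only [abs_of_nonpos (Set.mem_Iic.1 hx), Complex.ofReal_neg]
  ring_nf

lemma eqOn_cexp_mul_sub_mul_abs_Ioi (a : ℝ) (s : ℂ) :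
    Set.EqOn (fun x : ℝ => Complex.exp (s * x - a * |x|))
      (fun x : ℝ => Complex.exp ((s - a) * x)) (Set.Ioi 0) := by
  intro x hx
  simp only [abs_of_pos (Set.mem_Ioi.1 hx)]
  ring_nf

variable {a : ℝ} {s : ℂ}

lemma integrable_cexp_mul_sub_mul_abs (h : |s.re| < a) :
    Integrable fun x : ℝ => Complex.exp (s * x - a * |x|) := by
  obtain ⟨hl, hr⟩ := abs_lt.1 h
  have hIic := (integrableOn_exp_mul_complex_Iic (a := s + a)
    (by rw [Complex.add_re, Complex.ofReal_re]; linarith) 0).congr_fun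
    (eqOn_cexp_mul_sub_mul_abs_Iic a s).symm measurableSet_Iic
  have hIoi := (integrableOn_exp_mul_complex_Ioi (a := s - a) (by simpa using hr) 0).congr_fun
    (eqOn_cexp_mul_sub_mul_abs_Ioi a s).symm measurableSet_Ioi
  simpa only [Set.Iic_union_Ioi, integrableOn_univ] using hIic.union hIoi

lemma integral_cexp_mul_sub_mul_abs (h : |s.re| < a) :
    ∫ x : ℝ, Complex.exp (s * x - a * |x|) = 2 * a / (a ^ 2 - s ^ 2) := by
  obtain ⟨hl, hr⟩ := abs_lt.1 h
  have hint := integrable_cexp_mul_sub_mul_abs h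
  have hadd : 0 < (s + a).re := by rw [Complex.add_re, Complex.ofReal_re]; linarith
  have hsub : (s - a).re < 0 := by simpa using hr
  have hadd_ne : s + a ≠ 0 := fun h0 => by simp [h0] at hadd
  have hsub_ne : s - a ≠ 0 := fun h0 => by simp [h0] at hsub
  rw [← intervalIntegral.integral_Iic_add_Ioi (b := 0) hint.integrableOn hint.integrableOn,
    setIntegral_congr_fun measurableSet_Iic (eqOn_cexp_mul_sub_mul_abs_Iic a s),
    setIntegral_congr_fun measurableSet_Ioi (eqOn_cexp_mul_sub_mul_abs_Ioi a s),
    integral_exp_mul_complex_Iic hadd, integral_exp_mul_complex_Ioi hsub]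
  have hsq : (a : ℂ) ^ 2 - s ^ 2 = -((s + a) * (s - a)) := by ring
  rw [hsq]
  simp only [Complex.ofReal_zero, mul_zero, Complex.exp_zero]
  field_simp
  ring

end LaplaceTransform

section ExpSpectralDensity

/-- The Fourier transform of `x ↦ exp (-|x| / σ)`, a Cauchy density of scale `1 / (2πσ)`. -/
noncomputable def expSpectralDensity (σ w : ℝ) : ℝ :=
  2 * σ / (1 + (2 * π * σ * w) ^ 2)

lemma integrable_expSpectralDensity {σ : ℝ} (hσ : σ ≠ 0) : Integrable (expSpectralDensity σ) := by
  unfold expSpectralDensity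
  simpa only [div_eq_mul_inv] using
    (integrable_inv_one_add_sq.comp_mul_left' (R := 2 * π * σ) (by positivity)).const_mul (2 * σ)

lemma expSpectralDensity_le_mul {σ τ r : ℝ} (hσ : 0 ≤ σ) (hτ : 0 ≤ τ) (hτσ : τ ≤ r * σ)
    (hστ : σ ≤ r * τ) (w : ℝ) : expSpectralDensity τ w ≤ r * expSpectralDensity σ w := by
  unfold expSpectralDensity
  rw [← mul_div_assoc, div_le_div_iff₀ (by positivity) (by positivity)]
  have h := mul_le_mul_of_nonneg_left hστ
    (by positivity : 0 ≤ 2 * τ * σ * (2 * π * w) ^ 2)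
  linarith

lemma exp_neg_abs_div_eq_cexp (σ x : ℝ) :
    (Real.exp (-|x| / σ) : ℂ) = Complex.exp (0 * x - (σ⁻¹ : ℝ) * |x|) := by
  push_cast
  ring_nf

lemma integrable_exp_neg_abs_div {σ : ℝ} (hσ : 0 < σ) :
    Integrable fun x : ℝ => (Real.exp (-|x| / σ) : ℂ) := by
  simpa only [exp_neg_abs_div_eq_cexp] using
    integrable_cexp_mul_sub_mul_abs (s := 0) (by simpa using hσ)

lemma fourier_exp_neg_abs_div {σ : ℝ} (hσ : 0 < σ) :
    𝓕 (fun x : ℝ => (Real.exp (-|x| / σ) : ℂ)) = fun w => (expSpectralDensity σ w : ℂ) := by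
  ext w
  let s : ℂ := (-2 * π * w : ℝ) * Complex.I
  have hexp (x : ℝ) : Complex.exp (↑(-2 * π * x * w) * Complex.I) • (Real.exp (-|x| / σ) : ℂ) =
      Complex.exp (s * x - (σ⁻¹ : ℝ) * |x|) := by
    rw [exp_neg_abs_div_eq_cexp, smul_eq_mul, ← Complex.exp_add]
    push_cast [s]
    ring_nf
  have hs : s ^ 2 = ((-(2 * π * w) ^ 2 : ℝ) : ℂ) := by
    rw [mul_pow, Complex.I_sq]
    push_cast
    ring
  have hre : |s.re| < σ⁻¹ := by simpa [s] using hσ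
  simp only [Real.fourier_real_eq_integral_exp_smul, hexp, integral_cexp_mul_sub_mul_abs hre, hs]
  norm_cast
  rw [expSpectralDensity, sub_neg_eq_add, div_eq_div_iff (by positivity) (by positivity)]
  field_simp

end ExpSpectralDensity

section ExpKernel

/-- The one-dimensional kernel `exp (-|x - y| / σ)`, the tensor factor of `l1expK`. -/
noncomputable def expKernel (σ x y : ℝ) : ℂ :=
  (Real.exp (-|x - y| / σ) : ℂ)

lemma l1expK_eq_prod (d : ℕ) (σ : ℝ) (x y : EuclideanSpace ℝ (Fin d)) :
    l1expK d σ x y = ∏ i, expKernel σ (x i) (y i) := by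
  simp only [l1expK, expKernel, ← Complex.ofReal_prod, ← Real.exp_sum, ← Finset.sum_div,
    Finset.sum_neg_distrib]

lemma isPSDKernel_expKernel {σ : ℝ} (hσ : 0 < σ) : IsPSDKernel (expKernel σ) := by
  have hF := fourier_exp_neg_abs_div hσ
  refine isPSDKernel_sub_of_fourier_nonneg (f := fun x : ℝ => (Real.exp (-|x| / σ) : ℂ))
    (by fun_prop) (integrable_exp_neg_abs_div hσ) ?_ fun w => ?_
  · rw [hF]
    exact (integrable_expSpectralDensity hσ.ne').ofReal
  · rw [hF, Complex.zero_le_real, expSpectralDensity]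
    positivity

lemma isPSDKernel_mul_expKernel_sub {σ τ r : ℝ} (hσ : 0 < σ) (hτ : 0 < τ) (hτσ : τ ≤ r * σ)
    (hστ : σ ≤ r * τ) : IsPSDKernel fun x y => r * expKernel σ x y - expKernel τ x y := by
  let e (ρ x : ℝ) : ℂ := Real.exp (-|x| / ρ)
  have hF (w : ℝ) : 𝓕 (fun x => r * e σ x - e τ x) w =
      ((r * expSpectralDensity σ w - expSpectralDensity τ w : ℝ) : ℂ) := by
    rw [fourier_const_mul_sub (integrable_exp_neg_abs_div hσ) (integrable_exp_neg_abs_div hτ),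
      fourier_exp_neg_abs_div hσ, fourier_exp_neg_abs_div hτ]
    push_cast
    rfl
  refine isPSDKernel_sub_of_fourier_nonneg (f := fun x => r * e σ x - e τ x) (by fun_prop)
    (((integrable_exp_neg_abs_div hσ).const_mul r).sub (integrable_exp_neg_abs_div hτ)) ?_
    fun w => ?_
  · rw [funext hF]
    exact (((integrable_expSpectralDensity hσ.ne').const_mul r).sub
      (integrable_expSpectralDensity hτ.ne')).ofReal
  · rw [hF, Complex.zero_le_real, sub_nonneg]
    exact expSpectralDensity_le_mul hσ.le hτ.le hτσ hστ w

lemma isPSDKernel_pow_mul_l1expK_sub (d : ℕ) {σ τ r : ℝ} (hσ : 0 < σ) (hτ : 0 < τ)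
    (hτσ : τ ≤ r * σ) (hστ : σ ≤ r * τ) :
    IsPSDKernel fun x y => ((r ^ d : ℝ) : ℂ) * l1expK d σ x y - l1expK d τ x y := by
  have hK (i : Fin d) :
      IsPSDKernel fun x y : EuclideanSpace ℝ (Fin d) => expKernel τ (x i) (y i) :=
    (isPSDKernel_expKernel hτ).comp fun x : EuclideanSpace ℝ (Fin d) => x i
  have hKG (i : Fin d) : IsPSDKernel fun x y : EuclideanSpace ℝ (Fin d) =>
      r * expKernel σ (x i) (y i) - expKernel τ (x i) (y i) :=
    (isPSDKernel_mul_expKernel_sub hσ hτ hτσ hστ).comp fun x : EuclideanSpace ℝ (Fin d) => x i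
  simpa only [l1expK_eq_prod, Finset.prod_mul_distrib, Finset.prod_const, Finset.card_univ,
    Fintype.card_fin, Complex.ofReal_pow] using
    IsPSDKernel.finsetProd_sub Finset.univ (fun i _ => hK i) fun i _ => hKG i

end ExpKernel

section ToeplitzSum

lemma pow_mul_pow_eq_pow_natAbs_sub {M : Type*} [Monoid M] {ε : M} (hε : ε ^ 2 = 1) (u v : ℕ) :
    ε ^ u * ε ^ v = ε ^ ((u : ℤ) - v).natAbs := by
  have hparity : u + v = ((u : ℤ) - v).natAbs + 2 * min u v := by lia
  rw [← pow_add, hparity, pow_add, pow_mul, hε, one_pow, mul_one]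

lemma sum_range_sum_range_natAbs_sub {R : Type*} [CommRing R] (f : ℕ → R) (N : ℕ) :
    ∑ u ∈ Finset.range N, ∑ v ∈ Finset.range N, f ((u : ℤ) - v).natAbs =
      ∑ n ∈ Finset.range N, (2 * ∑ k ∈ Finset.range (n + 1), f k - f 0) := by
  induction N with
  | zero => simp only [Finset.range_zero, Finset.sum_empty]
  | succ N ih =>
    have hcol : ∑ u ∈ Finset.range N, f ((u : ℤ) - N).natAbs =
        ∑ k ∈ Finset.range (N + 1), f k - f 0 := by
      rw [Finset.sum_range_succ', add_sub_cancel_right, ← Finset.sum_range_reflect]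
      refine Finset.sum_congr rfl fun k hk => congrArg f ?_
      have := Finset.mem_range.1 hk
      lia
    have hrow : ∑ v ∈ Finset.range (N + 1), f ((N : ℤ) - v).natAbs =
        ∑ k ∈ Finset.range (N + 1), f k := by
      rw [← Finset.sum_range_reflect]
      refine Finset.sum_congr rfl fun k hk => congrArg f ?_
      have := Finset.mem_range.1 hk
      lia
    rw [Finset.sum_range_succ, hrow, Finset.sum_range_succ (fun n => 2 * _ - f 0), ← ih]
    simp only [fun u : ℕ => Finset.sum_range_succ (fun v : ℕ => f ((u : ℤ) - v).natAbs) N,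
      Finset.sum_add_distrib, hcol]
    ring

lemma tendsto_inv_mul_sum_sum_natAbs_sub {f : ℕ → ℝ} {s : ℝ} (hf : HasSum f s) :
    Tendsto (fun N : ℕ => (N : ℝ)⁻¹ *
      ∑ u ∈ Finset.range N, ∑ v ∈ Finset.range N, f ((u : ℤ) - v).natAbs)
      atTop (𝓝 (2 * s - f 0)) := by
  simp only [sum_range_sum_range_natAbs_sub]
  exact (((hf.tendsto_sum_nat.comp (tendsto_add_atTop_nat 1)).const_mul 2).sub_const (f 0)).cesaro

lemma tendsto_inv_mul_sum_sum_pow_natAbs_sub {z : ℝ} (hz : |z| < 1) :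
    Tendsto (fun N : ℕ => (N : ℝ)⁻¹ *
      ∑ u ∈ Finset.range N, ∑ v ∈ Finset.range N, z ^ ((u : ℤ) - v).natAbs)
      atTop (𝓝 ((1 + z) / (1 - z))) := by
  have hz_ne : 1 - z ≠ 0 := by linarith [le_abs_self z]
  have hlim : (1 + z) / (1 - z) = 2 * (1 - z)⁻¹ - z ^ 0 := by
    field_simp
    ring
  rw [hlim]
  exact tendsto_inv_mul_sum_sum_natAbs_sub (hasSum_geometric_of_abs_lt_one hz)

end ToeplitzSum

section LowerBound

variable {d : ℕ} {t ε lam : ℝ}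

lemma expKernel_natCast_mul (σ : ℝ) (ht : 0 ≤ t) (u v : ℕ) :
    expKernel σ (u * t) (v * t) = ((Real.exp (-t / σ) ^ ((u : ℤ) - v).natAbs : ℝ) : ℂ) := by
  have habs : |(u : ℝ) * t - v * t| = ((u : ℤ) - v).natAbs * t := by
    rw [← sub_mul, abs_mul, abs_of_nonneg ht, Nat.cast_natAbs]
    push_cast
    rfl
  rw [expKernel, habs, ← Real.exp_nat_mul, ← mul_neg, mul_div_assoc]

lemma kernelForm_expKernel (σ : ℝ) (ht : 0 ≤ t) (hε : ε ^ 2 = 1) (N : ℕ) :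
    kernelForm (expKernel σ) (fun u : Fin N => u * t) (fun u => ((ε ^ (u : ℕ) : ℝ) : ℂ)) =
      ((∑ u ∈ Finset.range N, ∑ v ∈ Finset.range N,
        (ε * Real.exp (-t / σ)) ^ ((u : ℤ) - v).natAbs : ℝ) : ℂ) := by
  simp only [kernelForm, expKernel_natCast_mul σ ht, Complex.conj_ofReal,
    Finset.sum_range, mul_pow, ← pow_mul_pow_eq_pow_natAbs_sub hε]
  push_cast
  rfl

lemma one_add_div_one_sub_pow_le {σ τ : ℝ} (hσ : 0 < σ) (hτ : 0 < τ) (ht : 0 < t) (hε : ε ^ 2 = 1)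
    (h : IsPSDKernel fun x y => (lam : ℂ) * l1expK d σ x y - l1expK d τ x y) :
    ((1 + ε * Real.exp (-t / τ)) / (1 - ε * Real.exp (-t / τ))) ^ d ≤
      lam * ((1 + ε * Real.exp (-t / σ)) / (1 - ε * Real.exp (-t / σ))) ^ d := by
  have hlim {ρ : ℝ} (hρ : 0 < ρ) := tendsto_inv_mul_sum_sum_pow_natAbs_sub
    (z := ε * Real.exp (-t / ρ)) (by
      rw [abs_mul, (abs_eq zero_le_one).2 (sq_eq_one_iff.1 hε), one_mul, Real.abs_exp,
        Real.exp_lt_one_iff]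
      exact div_neg_of_neg_of_pos (neg_neg_of_pos ht) hρ)
  refine le_of_tendsto_of_tendsto' ((hlim hτ).pow d) (((hlim hσ).pow d).const_mul lam) fun N => ?_
  have hprod := h.comp (WithLp.toLp 2 : (Fin d → ℝ) → EuclideanSpace ℝ (Fin d))
  simp only [l1expK_eq_prod] at hprod
  have hN := hprod.prod_kernelForm_le (fun _ (u : Fin N) => u * t)
    fun _ u => ((ε ^ (u : ℕ) : ℝ) : ℂ)
  simp only [kernelForm_expKernel _ ht.le hε, Finset.prod_const, Finset.card_univ,
    Fintype.card_fin, ← Complex.ofReal_pow, ← Complex.ofReal_mul, Complex.real_le_real] at hN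
  rw [mul_pow, mul_pow, mul_left_comm]
  exact mul_le_mul_of_nonneg_left hN (by positivity)

lemma tendsto_inv_mul_one_sub_exp_div_one_add_exp (σ : ℝ) :
    Tendsto (fun t => t⁻¹ * ((1 - Real.exp (-t / σ)) / (1 + Real.exp (-t / σ))))
      (𝓝[>] 0) (𝓝 (2 * σ)⁻¹) := by
  have hexp : HasDerivAt (fun t => Real.exp (-t / σ)) (-σ⁻¹) 0 := by
    simpa [neg_div] using ((hasDerivAt_id (0 : ℝ)).neg.div_const σ).exp
  have hquot := (hexp.const_sub 1).div (hexp.const_add 1) (by positivity)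
  convert hquot.tendsto_slope_zero_right using 2
  · simp only [zero_add, Pi.div_apply, neg_zero, zero_div, Real.exp_zero, sub_self, sub_zero,
      smul_eq_mul]
  · simp only [neg_zero, zero_div, Real.exp_zero]
    ring

lemma div_pow_le_of_isPSDKernel {σ τ : ℝ} (hσ : 0 < σ) (hτ : 0 < τ)
    (h : IsPSDKernel fun x y => (lam : ℂ) * l1expK d σ x y - l1expK d τ x y) :
    (σ / τ) ^ d ≤ lam := by
  have hlim (ρ : ℝ) := (tendsto_inv_mul_one_sub_exp_div_one_add_exp ρ).pow d
  have hle : (2 * τ)⁻¹ ^ d ≤ lam * (2 * σ)⁻¹ ^ d := by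
    refine le_of_tendsto_of_tendsto (hlim τ) ((hlim σ).const_mul lam) ?_
    filter_upwards [self_mem_nhdsWithin] with t (ht : 0 < t)
    have ht_le := one_add_div_one_sub_pow_le (ε := -1) hσ hτ ht (by norm_num) h
    simp only [neg_one_mul, sub_neg_eq_add, ← sub_eq_add_neg] at ht_le
    rw [mul_pow, mul_pow, mul_left_comm]
    exact mul_le_mul_of_nonneg_left ht_le (by positivity)
  have hdiv := (div_le_iff₀ (by positivity)).2 hle
  rwa [← div_pow, inv_div_inv, mul_div_mul_left _ _ two_ne_zero] at hdiv

lemma div_pow_le_of_isPSDKernel_swap {σ τ : ℝ} (hσ : 0 < σ) (hτ : 0 < τ)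
    (h : IsPSDKernel fun x y => (lam : ℂ) * l1expK d σ x y - l1expK d τ x y) :
    (τ / σ) ^ d ≤ lam := by
  have hlim {ρ : ℝ} (hρ : 0 < ρ) :=
    ((tendsto_inv_mul_one_sub_exp_div_one_add_exp ρ).inv₀ (by positivity)).pow d
  simp only [mul_inv, inv_inv, inv_div] at hlim
  have hle : (2 * τ) ^ d ≤ lam * (2 * σ) ^ d := by
    refine le_of_tendsto_of_tendsto (hlim hτ) ((hlim hσ).const_mul lam) ?_
    filter_upwards [self_mem_nhdsWithin] with t (ht : 0 < t)
    have ht_le := one_add_div_one_sub_pow_le (ε := 1) hσ hτ ht (by norm_num) h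
    simp only [one_mul] at ht_le
    rw [mul_pow, mul_pow, mul_left_comm]
    exact mul_le_mul_of_nonneg_left ht_le (by positivity)
  have hdiv := (div_le_iff₀ (by positivity)).2 hle
  rwa [← div_pow, mul_div_mul_left _ _ two_ne_zero] at hdiv

end LowerBound

lemma isLeast_isPSDKernel_mul_l1expK_sub (d : ℕ) {σ τ : ℝ} (hσ : 0 < σ) (hτ : 0 < τ) :
    IsLeast {lam : ℝ | 0 ≤ lam ∧
        IsPSDKernel fun x y => (lam : ℂ) * l1expK d σ x y - l1expK d τ x y}
      (max (σ / τ) (τ / σ) ^ d) := by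
  refine ⟨⟨by positivity, isPSDKernel_pow_mul_l1expK_sub d hσ hτ ?_ ?_⟩, fun lam h => ?_⟩
  · exact (div_le_iff₀ hσ).1 (le_max_right _ _)
  · exact (div_le_iff₀ hτ).1 (le_max_left _ _)
  · rcases max_choice (σ / τ) (τ / σ) with hmax | hmax <;> rw [hmax]
    · exact div_pow_le_of_isPSDKernel hσ hτ h.2
    · exact div_pow_le_of_isPSDKernel_swap hσ hτ h.2

/-- For `0 < σ₁ < σ₂`: `(σ₂/σ₁)^d` is the least `λ ≥ 0` making `λE_{σ₂} − E_{σ₁}`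
positive semidefinite, and also the least `λ ≥ 0` making `λE_{σ₁} − E_{σ₂}`
positive semidefinite (in particular both differences with this constant are
positive semidefinite kernels). -/
theorem l1exp_inclusion (d : ℕ) (σ₁ σ₂ : ℝ) (hσ₁ : 0 < σ₁) (h₁₂ : σ₁ < σ₂) :
    (IsPSDKernel (fun x y : EuclideanSpace ℝ (Fin d) =>
        (((σ₂ / σ₁) ^ d : ℝ) : ℂ) * l1expK d σ₂ x y - l1expK d σ₁ x y) ∧
      IsLeast {lam : ℝ | 0 ≤ lam ∧
          IsPSDKernel (fun x y : EuclideanSpace ℝ (Fin d) =>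
            (lam : ℂ) * l1expK d σ₂ x y - l1expK d σ₁ x y)}
        ((σ₂ / σ₁) ^ d)) ∧
    (IsPSDKernel (fun x y : EuclideanSpace ℝ (Fin d) =>
        (((σ₂ / σ₁) ^ d : ℝ) : ℂ) * l1expK d σ₁ x y - l1expK d σ₂ x y) ∧
      IsLeast {lam : ℝ | 0 ≤ lam ∧
          IsPSDKernel (fun x y : EuclideanSpace ℝ (Fin d) =>
            (lam : ℂ) * l1expK d σ₁ x y - l1expK d σ₂ x y)}
        ((σ₂ / σ₁) ^ d)) := by
  have hσ₂ : 0 < σ₂ := hσ₁.trans h₁₂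
  have hdiv : σ₁ / σ₂ ≤ σ₂ / σ₁ := by gcongr
  have hleast₂₁ := isLeast_isPSDKernel_mul_l1expK_sub d hσ₂ hσ₁
  have hleast₁₂ := isLeast_isPSDKernel_mul_l1expK_sub d hσ₁ hσ₂
  rw [max_eq_left hdiv] at hleast₂₁
  rw [max_eq_right hdiv] at hleast₁₂
  exact ⟨⟨hleast₂₁.1.2, hleast₂₁⟩, hleast₁₂.1.2, hleast₁₂⟩
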